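/- arXiv:1008.0080 — 2 statements merged into one kernel-verified Lean document; each statement's English description precedes it below -/
import Mathlib

section
/- Every branch of an N-dialogue tree that contains a defensive move by the Opponent O either terminates at an O-move or is infinite. -/
/-! ## Dialogical logic: formulas, statements, moves -/

/-- Propositional formulas, built from atoms (indexed by `ℕ`) and `¬`, `∧`, `∨`, `→`. -/
inductive Formula : Type
  | atom : ℕ → Formula
  | neg : Formula → Formula
  | conj : Formula → Formula → Formula
  | disj : Formula → Formula → Formula
  | impl : Formula → Formula → Formula
  deriving DecidableEq, Inhabited

/-- Statements: formulas together with the three symbolic attacks `∧_L`, `∧_R` and `?`. -/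
inductive Statement : Type
  | form : Formula → Statement
  | conjL : Statement  -- the symbolic attack ∧_L
  | conjR : Statement  -- the symbolic attack ∧_R
  | question : Statement   -- the symbolic attack ?
  deriving DecidableEq, Inhabited

/-- A formula is atomic iff it is an atom. -/
def Formula.isAtomic : Formula → Prop
  | .atom _ => True
  | _ => False

/-- A move of a dialogue: a statement together with a reference.  The reference is
`none` for the initial move, `some (m, true)` for an attack on the assertion made at
move `m`, and `some (m, false)` for a defense against the attack made at move `m`. -/
structure Move : Type where
  stmt : Statement
  ref : Option (ℕ × Bool)
  deriving DecidableEq, Inhabited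

/-! ## Particle rules -/

/-- Particle rules, attacks: `Attacks a φ` holds when the statement `a` is an
admissible attack against the assertion `φ`. -/
inductive Attacks : Statement → Formula → Prop
  | conjL (φ ψ : Formula) : Attacks .conjL (.conj φ ψ)
  | conjR (φ ψ : Formula) : Attacks .conjR (.conj φ ψ)
  | disj (φ ψ : Formula) : Attacks .question (.disj φ ψ)
  | impl (φ ψ : Formula) : Attacks (.form φ) (.impl φ ψ)
  | neg (φ : Formula) : Attacks (.form φ) (.neg φ)

/-- Particle rules, defenses: `Defends s a φ` holds when the statement `s` is an
admissible defense of the assertion `φ` against the attack `a`.  (A negation admits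
no defense.) -/
inductive Defends : Statement → Statement → Formula → Prop
  | conjL (φ ψ : Formula) : Defends (.form φ) .conjL (.conj φ ψ)
  | conjR (φ ψ : Formula) : Defends (.form ψ) .conjR (.conj φ ψ)
  | disjL (φ ψ : Formula) : Defends (.form φ) .question (.disj φ ψ)
  | disjR (φ ψ : Formula) : Defends (.form ψ) .question (.disj φ ψ)
  | impl (φ ψ : Formula) : Defends (.form ψ) (.form φ) (.impl φ ψ)

/-! ## Dialogues

A (finite stage of a) dialogue is modelled as a list of moves; the move at index `i`
is the `i`-th move, made by Proponent P if `i` is even and by Opponent O if `i` is odd. -/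

/-- The skeletal dialogue conditions: move 0 is an assertion of a formula with no
reference, and every later move is an attack on, or a defense against, a specified
earlier move of the other player, in accordance with the particle rules; only
non-atomic assertions may be attacked. -/
def IsDialogue (d : List Move) : Prop :=
  (∀ _ : 0 < d.length, d[0]!.ref = none ∧ ∃ φ : Formula, d[0]!.stmt = .form φ) ∧
  (∀ i : ℕ, 0 < i → i < d.length →
    ∃ (m : ℕ) (z : Bool), d[i]!.ref = some (m, z) ∧ m < i ∧ m % 2 ≠ i % 2 ∧
      (z = true →
        ∃ φ : Formula, d[m]!.stmt = .form φ ∧ ¬ φ.isAtomic ∧ Attacks d[i]!.stmt φ) ∧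
      (z = false →
        ∃ (k : ℕ) (φ : Formula), d[m]!.ref = some (k, true) ∧ k < m ∧
          d[k]!.stmt = .form φ ∧ Defends d[i]!.stmt d[m]!.stmt φ))

/-- Rule D10: P may assert an atomic formula only if O has asserted it earlier. -/
def RuleD10 (d : List Move) : Prop :=
  ∀ i < d.length, i % 2 = 0 → ∀ a : ℕ, d[i]!.stmt = .form (.atom a) →
    ∃ j < i, j % 2 = 1 ∧ d[j]!.stmt = .form (.atom a)

/-- Rule D13: each P-assertion may be attacked at most once. -/
def RuleD13 (d : List Move) : Prop :=
  ∀ m : ℕ, m % 2 = 0 → ∀ i < d.length, ∀ j < d.length,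
    d[i]!.ref = some (m, true) → d[j]!.ref = some (m, true) → i = j

/-- Rule E: O may only react (attack or defend) against the immediately preceding
P-move. -/
def RuleE (d : List Move) : Prop :=
  ∀ i < d.length, i % 2 = 1 → ∃ z : Bool, d[i]!.ref = some (i - 1, z)

/-- The rule set N = {D10, D13}. -/
def NRules (d : List Move) : Prop := RuleD10 d ∧ RuleD13 d

/-- The rule set CL = {D10, D13, E}. -/
def CLRules (d : List Move) : Prop := RuleD10 d ∧ RuleD13 d ∧ RuleE d

/-- A dialogue commences with `φ` when its initial move is P's assertion of `φ`. -/
def CommencesWith (φ : Formula) (d : List Move) : Prop :=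
  0 < d.length ∧ d[0]!.stmt = .form φ

/-- An `S`-dialogue for `φ` (for a rule set `S`): a dialogue commencing with `φ`
that obeys the structural rules `S`.  These are exactly the branches (identified
with their underlying move sequences) of the `S`-dialogue tree for `φ`. -/
def SDialogueFor (S : List Move → Prop) (φ : Formula) (d : List Move) : Prop :=
  IsDialogue d ∧ S d ∧ CommencesWith φ d

/-- P wins a finite `S`-dialogue for `φ`: it ends with a P-move (the last index,
`d.length - 1`, is even, i.e. `d.length` is odd) and it cannot be extended by any
legal further (O-)move. -/
def WinsFor (S : List Move → Prop) (φ : Formula) (d : List Move) : Prop :=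
  SDialogueFor S φ d ∧ d.length % 2 = 1 ∧ ∀ m : Move, ¬ SDialogueFor S φ (d ++ [m])

/-- An `S`-winning strategy for P for `φ`, modelled as a set `T` of `S`-dialogues for
`φ`: the nodes of a rooted subtree of the `S`-dialogue tree for `φ`, each node being
identified with the dialogue leading from the root to it.  The conditions state that
`T` is a nonempty, prefix-closed set of `S`-dialogues for `φ` (hence a rooted subtree
of the `S`-dialogue tree with the same root), that every branch of `T` is a finite
`S`-dialogue won by P (leaves are wins for P, and there is no infinite branch), that
every node at odd depth (an O-move) has exactly one child, and that every node at
even depth (a P-move) has the same children in `T` as in the full dialogue tree. -/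
structure IsWinningStrategy (S : List Move → Prop) (φ : Formula) (T : Set (List Move)) : Prop where
  nonempty : T.Nonempty
  dialogues : ∀ d ∈ T, SDialogueFor S φ d
  prefix_closed : ∀ d ∈ T, ∀ e : List Move, e <+: d → 0 < e.length → e ∈ T
  leaf_wins : ∀ d ∈ T, (∀ m : Move, d ++ [m] ∉ T) → WinsFor S φ d
  no_infinite_branch : ∀ f : ℕ → Move, ∃ n : ℕ, 0 < n ∧ (List.ofFn fun i : Fin n => f i) ∉ T
  odd_unique_child : ∀ d ∈ T, 0 < d.length → d.length % 2 = 0 → ∃! m : Move, d ++ [m] ∈ T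
  even_all_children : ∀ d ∈ T, d.length % 2 = 1 →
    ∀ m : Move, SDialogueFor S φ (d ++ [m]) → d ++ [m] ∈ T

/-- `φ` is `S`-valid iff P has an `S`-winning strategy for `φ`. -/
def SValid (S : List Move → Prop) (φ : Formula) : Prop :=
  ∃ T : Set (List Move), IsWinningStrategy S φ T

/-- `φ` is N-valid (`⊨_N φ`) iff P has an N-winning strategy for `φ`. -/
def NValid (φ : Formula) : Prop := SValid NRules φ

/-!
A defense may be repeated: a move stays a legal reply at every later position of the same parity,
and neither D10 nor D13 objects, since an atom that P was entitled to assert once stays available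
and D13 limits attacks only. So a dialogue in which a player has defended can be extended
whenever it is that player's turn, and if it is maximal, that player made its last move.
-/

section AppendSingleton

variable {α : Type*}

theorem getElem!_append_left [Inhabited α] {l : List α} {i : ℕ} (hi : i < l.length) (l' : List α) :
    (l ++ l')[i]! = l[i]! := by
  simp [getElem!_def, List.getElem?_append_left hi]

theorem getElem!_append_singleton_length [Inhabited α] (l : List α) (x : α) :
    (l ++ [x])[l.length]! = x := by
  simp

theorem lt_length_append_singleton_iff {l : List α} {x : α} {i : ℕ} :
    i < (l ++ [x]).length ↔ i < l.length ∨ i = l.length := by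
  simp [le_iff_lt_or_eq]

end AppendSingleton

/-- The move `x`, made at position `i`, is a legal reply to a move of `d`: the condition that
`IsDialogue` imposes on every move after the initial one. The move is separated from its position
so that it can be considered at a position which `d` does not have yet. -/
def IsReply (d : List Move) (i : ℕ) (x : Move) : Prop :=
  ∃ (m : ℕ) (z : Bool), x.ref = some (m, z) ∧ m < i ∧ m % 2 ≠ i % 2 ∧
    (z = true →
      ∃ φ : Formula, d[m]!.stmt = .form φ ∧ ¬ φ.isAtomic ∧ Attacks x.stmt φ) ∧
    (z = false →
      ∃ (k : ℕ) (φ : Formula), d[m]!.ref = some (k, true) ∧ k < m ∧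
        d[k]!.stmt = .form φ ∧ Defends x.stmt d[m]!.stmt φ)

section Repetition

variable {d : List Move} {x : Move} {i j m : ℕ}

theorem IsReply.of_le (h : IsReply d i x) (hij : i ≤ j) (hparity : i % 2 = j % 2) :
    IsReply d j x := by
  obtain ⟨m, z, href, hmi, hplayer, hrules⟩ := h
  exact ⟨m, z, href, hmi.trans_le hij, hparity ▸ hplayer, hrules⟩

theorem IsReply.append (h : IsReply d i x) (hi : i ≤ d.length) (e : List Move) :
    IsReply (d ++ e) i x := by
  obtain ⟨m, z, href, hmi, hplayer, hattack, hdefense⟩ := h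
  have hm : (d ++ e)[m]! = d[m]! := getElem!_append_left (hmi.trans_le hi) e
  refine ⟨m, z, href, hmi, hplayer, hm ▸ hattack, fun hz ↦ ?_⟩
  obtain ⟨k, φ, hk, hkm, hφ, hdefends⟩ := hdefense hz
  have hkd : (d ++ e)[k]! = d[k]! := getElem!_append_left (by omega) e
  exact ⟨k, φ, hm ▸ hk, hkm, hkd ▸ hφ, hm ▸ hdefends⟩

theorem IsDialogue.append_singleton (h : IsDialogue d) (hd : 0 < d.length)
    (hx : IsReply d d.length x) : IsDialogue (d ++ [x]) := by
  refine ⟨fun _ ↦ (getElem!_append_left hd [x]).symm ▸ h.1 hd, fun i hi hlt ↦ ?_⟩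
  change IsReply (d ++ [x]) i (d ++ [x])[i]!
  obtain hlt | rfl := lt_length_append_singleton_iff.mp hlt
  · have hreply : IsReply d i d[i]! := h.2 i hi hlt
    rw [getElem!_append_left hlt]
    exact hreply.append hlt.le [x]
  · rw [getElem!_append_singleton_length]
    exact hx.append le_rfl [x]

theorem RuleD10.append_singleton (h : RuleD10 d)
    (hx : d.length % 2 = 0 → ∀ a : ℕ, x.stmt = .form (.atom a) →
      ∃ j < d.length, j % 2 = 1 ∧ d[j]!.stmt = .form (.atom a)) :
    RuleD10 (d ++ [x]) := by
  intro i hi heven a ha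
  have hasserted : i ≤ d.length ∧ ∃ j < i, j % 2 = 1 ∧ d[j]!.stmt = .form (.atom a) := by
    obtain hi | rfl := lt_length_append_singleton_iff.mp hi
    · rw [getElem!_append_left hi] at ha
      exact ⟨hi.le, h i hi heven a ha⟩
    · rw [getElem!_append_singleton_length] at ha
      exact ⟨le_rfl, hx heven a ha⟩
  obtain ⟨hid, j, hji, hodd, hj⟩ := hasserted
  exact ⟨j, hji, hodd, by rwa [getElem!_append_left (hji.trans_le hid)]⟩

theorem RuleD13.append_singleton_of_not_attack (h : RuleD13 d)
    (hx : ∀ m, x.ref ≠ some (m, true)) : RuleD13 (d ++ [x]) := by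
  intro m hm i hi j hj href_i href_j
  have attack_mem : ∀ k < (d ++ [x]).length, (d ++ [x])[k]!.ref = some (m, true) →
      k < d.length ∧ d[k]!.ref = some (m, true) := by
    intro k hk href
    obtain hk | rfl := lt_length_append_singleton_iff.mp hk
    · exact ⟨hk, by rwa [getElem!_append_left hk] at href⟩
    · rw [getElem!_append_singleton_length] at href
      exact absurd href (hx m)
  obtain ⟨hi, href_i⟩ := attack_mem i hi href_i
  obtain ⟨hj, href_j⟩ := attack_mem j hj href_j
  exact h m hm i hi j hj href_i href_j

theorem CommencesWith.append {φ : Formula} (h : CommencesWith φ d) (e : List Move) :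
    CommencesWith φ (d ++ e) :=
  ⟨List.length_append ▸ Nat.add_pos_left h.1 _, by rw [getElem!_append_left h.1]; exact h.2⟩

theorem IsDialogue.repeat_move (h : IsDialogue d) (hpos : 0 < i) (hi : i < d.length)
    (hturn : i % 2 = d.length % 2) : IsDialogue (d ++ [d[i]!]) := by
  have hreply : IsReply d i d[i]! := h.2 i hpos hi
  exact h.append_singleton (hpos.trans hi) (hreply.of_le hi.le hturn)

theorem RuleD10.repeat_move (h : RuleD10 d) (hi : i < d.length) (hturn : i % 2 = d.length % 2) :
    RuleD10 (d ++ [d[i]!]) :=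
  h.append_singleton fun heven a ha ↦
    have ⟨j, hji, hj⟩ := h i hi (hturn.trans heven) a ha
    ⟨j, hji.trans hi, hj⟩

theorem SDialogueFor.repeat_defense {φ : Formula} (h : SDialogueFor NRules φ d)
    (hi : i < d.length) (hdef : d[i]!.ref = some (m, false)) (hturn : i % 2 = d.length % 2) :
    SDialogueFor NRules φ (d ++ [d[i]!]) := by
  obtain ⟨hdialogue, ⟨hD10, hD13⟩, hcommences⟩ := h
  have hpos : 0 < i := by
    refine Nat.pos_of_ne_zero ?_
    rintro rfl
    exact absurd ((hdialogue.1 hi).1.symm.trans hdef) nofun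
  have hnot_attack : ∀ n, d[i]!.ref ≠ some (n, true) :=
    fun n hn ↦ absurd (hdef.symm.trans hn) (by simp)
  exact ⟨hdialogue.repeat_move hpos hi hturn,
    ⟨hD10.repeat_move hi hturn, hD13.append_singleton_of_not_attack hnot_attack⟩,
    hcommences.append _⟩

end Repetition

/-- The conclusion says that the last move, at index `d.length - 1`, is by the player who made the
defense at index `i`. -/
theorem o_defense_infinite_branch_general (φ : Formula) (d : List Move)
    (hdial : SDialogueFor NRules φ d)
    (hmax : ∀ x : Move, ¬ SDialogueFor NRules φ (d ++ [x]))
    {i m : ℕ} (hi : i < d.length) (hdef : d[i]!.ref = some (m, false)) :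
    d.length % 2 ≠ i % 2 :=
  fun hturn ↦ hmax d[i]! (hdial.repeat_defense hi hdef hturn.symm)

/-- Every branch of an N-dialogue tree that contains a defensive
move by the Opponent O either terminates at an O-move or is infinite.  Formally:
every *finite* branch of the N-dialogue tree for `φ` — i.e., a finite N-dialogue for
`φ` that is maximal, admitting no legal extension — that contains a defensive move
by O (a defense at an odd-indexed move) terminates at an O-move (its last index,
`d.length - 1`, is odd; i.e., `d.length` is even).  The infinite branches are
precisely the branches not covered by this quantification, which accounts for the
disjunct "or is infinite". -/
theorem o_defense_infinite_branch (φ : Formula) (d : List Move)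
    (hdial : SDialogueFor NRules φ d)
    (hmax : ∀ m : Move, ¬ SDialogueFor NRules φ (d ++ [m]))
    (hdef : ∃ i < d.length, i % 2 = 1 ∧ ∃ m : ℕ, d[i]!.ref = some (m, false)) :
    d.length % 2 = 0 := by
  obtain ⟨i, hi, hodd, m, hdef⟩ := hdef
  have hlast := o_defense_infinite_branch_general φ d hdial hmax hi hdef
  omega
end

section
/- (Weakening) For all propositional formulas φ and ψ: if ψ is N-valid, then the implication φ → ψ is N-valid. -/
/-!
P wins `φ → ψ` by ignoring `φ`.  O's only reply to the opening assertion is to attack it by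
asserting `φ`, and P defends with `ψ`.  From then on P plays the given strategy for `ψ`, with all
references shifted by two.  O cannot leave this copy of the game: move 0 has already been attacked
once, so D13 forbids attacking it again, and it is not an attack that O could defend against.
O's additional assertion `φ` can only make D10 easier for P.
-/

section GetElem

variable {α : Type*} [Inhabited α] {l l' : List α} {i : ℕ}

theorem getElem!_eq_of_prefix (h : l <+: l') (hi : i < l.length) : l[i]! = l'[i]! := by
  rw [getElem!_pos l i hi, getElem!_pos l' i (hi.trans_le h.length_le), h.getElem]

theorem getElem!_append_of_lt (l' : List α) (hi : i < l.length) : (l ++ l')[i]! = l[i]! :=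
  (getElem!_eq_of_prefix (List.prefix_append l l') hi).symm

theorem getElem!_concat_length (l : List α) (a : α) : (l ++ [a])[l.length]! = a := by
  simp

end GetElem

variable {S : List Move → Prop} {φ ψ : Formula} {d e : List Move} {m : Move} {i k : ℕ}

/-- `m`, made as move number `i`, is an attack on or a defense against one of the moves of `d`
with a smaller number, by the other player, according to the particle rules.  This is the
condition that `IsDialogue` imposes on every move but the first. -/
def IsReplyAt (d : List Move) (i : ℕ) (m : Move) : Prop :=
  ∃ (k : ℕ) (z : Bool), m.ref = some (k, z) ∧ k < i ∧ k % 2 ≠ i % 2 ∧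
    (z = true → ∃ χ : Formula, d[k]!.stmt = .form χ ∧ ¬ χ.isAtomic ∧ Attacks m.stmt χ) ∧
    (z = false → ∃ (j : ℕ) (χ : Formula), d[k]!.ref = some (j, true) ∧ j < k ∧
      d[j]!.stmt = .form χ ∧ Defends m.stmt d[k]!.stmt χ)

theorem isReplyAt_congr (h : ∀ k < i, e[k]! = d[k]!) : IsReplyAt e i m ↔ IsReplyAt d i m := by
  unfold IsReplyAt
  refine exists₂_congr fun k z ↦ and_congr_right fun _ ↦ and_congr_right fun hk ↦ ?_
  rw [h k hk]
  refine and_congr_right fun _ ↦ and_congr_right fun _ ↦ imp_congr_right fun _ ↦ ?_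
  refine exists₂_congr fun j χ ↦ and_congr_right fun _ ↦ and_congr_right fun hj ↦ ?_
  rw [h j (hj.trans hk)]

theorem IsDialogue.isReplyAt (hd : IsDialogue d) (h0 : 0 < i) (hi : i < d.length) :
    IsReplyAt d i d[i]! :=
  hd.2 i h0 hi

theorem IsDialogue.of_prefix (hd : IsDialogue d) (h : e <+: d) : IsDialogue e := by
  refine ⟨fun h0 ↦ ?_, fun i h0 hi ↦ ?_⟩
  · rw [getElem!_eq_of_prefix h h0]
    exact hd.1 (h0.trans_le h.length_le)
  · rw [getElem!_eq_of_prefix h hi]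
    exact (isReplyAt_congr fun k hk ↦ getElem!_eq_of_prefix h (hk.trans hi)).2
      (hd.isReplyAt h0 (hi.trans_le h.length_le))

theorem IsDialogue.isReplyAt_of_concat (h : IsDialogue (d ++ [m])) (hd : 0 < d.length) :
    IsReplyAt d d.length m := by
  have hm := h.isReplyAt hd (by simp)
  rw [getElem!_concat_length] at hm
  exact (isReplyAt_congr fun k hk ↦ getElem!_append_of_lt [m] hk).1 hm

theorem IsDialogue.concat (hd : IsDialogue d) (h0 : 0 < d.length)
    (hm : IsReplyAt d d.length m) : IsDialogue (d ++ [m]) := by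
  have agree : ∀ k < d.length, (d ++ [m])[k]! = d[k]! := fun k hk ↦ getElem!_append_of_lt [m] hk
  refine ⟨fun _ ↦ by rw [agree 0 h0]; exact hd.1 h0, fun i hi0 hi ↦ ?_⟩
  rcases Nat.lt_or_eq_of_le (Nat.le_of_lt_succ (by simpa using hi)) with hlt | rfl
  · rw [agree i hlt]
    exact (isReplyAt_congr fun k hk ↦ agree k (hk.trans hlt)).2 (hd.isReplyAt hi0 hlt)
  · rw [getElem!_concat_length]
    exact (isReplyAt_congr agree).2 hm

theorem RuleD10.of_prefix (hd : RuleD10 d) (h : e <+: d) : RuleD10 e := by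
  intro i hi hP a ha
  rw [getElem!_eq_of_prefix h hi] at ha
  obtain ⟨j, hj, hO, hja⟩ := hd i (hi.trans_le h.length_le) hP a ha
  exact ⟨j, hj, hO, by rwa [getElem!_eq_of_prefix h (hj.trans hi)]⟩

theorem RuleD13.of_prefix (hd : RuleD13 d) (h : e <+: d) : RuleD13 e := by
  intro k hk i hi j hj hik hjk
  rw [getElem!_eq_of_prefix h hi] at hik
  rw [getElem!_eq_of_prefix h hj] at hjk
  exact hd k hk i (hi.trans_le h.length_le) j (hj.trans_le h.length_le) hik hjk

theorem RuleD10.concat_of_odd (hd : RuleD10 d) (hO : d.length % 2 = 1) :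
    RuleD10 (d ++ [m]) := by
  intro i hi hP a ha
  rw [List.length_append, List.length_singleton] at hi
  have hlt : i < d.length := by omega
  rw [getElem!_append_of_lt _ hlt] at ha
  obtain ⟨j, hj, hjO, hja⟩ := hd i hlt hP a ha
  exact ⟨j, hj, hjO, by rwa [getElem!_append_of_lt _ (hj.trans hlt)]⟩

namespace Move

/-- P's assertion of `φ` as the initial move of a dialogue. -/
def opening (φ : Formula) : Move := ⟨.form φ, none⟩

/-- O's attack on an initial assertion of the form `φ → ψ`. -/
def challenge (φ : Formula) : Move := ⟨.form φ, some (0, true)⟩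

/-- The move that plays the part of `m` when the dialogue is preceded by two further moves.  A move
without reference, that is, the initial one, becomes a defense against move 1. -/
def delay (m : Move) : Move :=
  ⟨m.stmt, match m.ref with
    | none => some (1, false)
    | some (k, z) => some (k + 2, z)⟩

theorem delay_ref_of_eq_some {z : Bool} (h : m.ref = some (k, z)) :
    m.delay.ref = some (k + 2, z) := by
  simp [delay, h]

theorem delay_ref_eq_attack_iff :
    m.delay.ref = some (k, true) ↔ ∃ j, k = j + 2 ∧ m.ref = some (j, true) := by
  rcases m with ⟨s, _ | ⟨j, z⟩⟩ <;> grind [delay]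

theorem delay_injective : Function.Injective delay := by
  rintro ⟨s, _ | ⟨j, z⟩⟩ ⟨t, _ | ⟨k, y⟩⟩ h <;> simp_all [delay]

end Move

/-- The dialogue `d` for `ψ`, played as a dialogue for `φ → ψ` after O has attacked the initial
assertion. -/
def weakenDialogue (φ ψ : Formula) (d : List Move) : List Move :=
  .opening (.impl φ ψ) :: .challenge φ :: d.map Move.delay

@[simp] theorem length_weakenDialogue : (weakenDialogue φ ψ d).length = d.length + 2 := by
  simp [weakenDialogue]

theorem weakenDialogue_getElem!_add_two (hi : i < d.length) :
    (weakenDialogue φ ψ d)[i + 2]! = d[i]!.delay := by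
  simp [weakenDialogue, hi]

theorem weakenDialogue_concat (d : List Move) (m : Move) :
    weakenDialogue φ ψ (d ++ [m]) = weakenDialogue φ ψ d ++ [m.delay] := by
  simp [weakenDialogue]

theorem weakenDialogue_injective : Function.Injective (weakenDialogue φ ψ) := fun d e h ↦
  List.map_injective_iff.2 Move.delay_injective (by simpa [weakenDialogue] using h)

theorem prefix_weakenDialogue_iff :
    e <+: weakenDialogue φ ψ d ↔
      e = [] ∨ e = [.opening (.impl φ ψ)] ∨ ∃ d', d' <+: d ∧ e = weakenDialogue φ ψ d' := by
  simp only [weakenDialogue, List.prefix_cons_iff, List.prefix_map_iff]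
  grind

theorem IsReplyAt.delay (hm : IsReplyAt d i m) (hi : i ≤ d.length) :
    IsReplyAt (weakenDialogue φ ψ d) (i + 2) m.delay := by
  obtain ⟨k, z, href, hk, hplayer, hattack, hdefense⟩ := hm
  have hkd : k < d.length := by omega
  refine ⟨k + 2, z, Move.delay_ref_of_eq_some href, by omega, by omega, ?_, fun hz ↦ ?_⟩
  · rwa [weakenDialogue_getElem!_add_two hkd]
  · obtain ⟨j, χ, hkj, hj, hjχ, hdef⟩ := hdefense hz
    rw [weakenDialogue_getElem!_add_two hkd]
    refine ⟨j + 2, χ, Move.delay_ref_of_eq_some hkj, by omega, ?_, hdef⟩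
    rwa [weakenDialogue_getElem!_add_two (by omega)]

theorem isReplyAt_challenge : IsReplyAt (weakenDialogue φ ψ d) 1 (.challenge φ) :=
  ⟨0, true, rfl, by omega, by omega,
    fun _ ↦ ⟨.impl φ ψ, rfl, not_false, .impl φ ψ⟩, by simp⟩

theorem isReplyAt_delay_opening : IsReplyAt (weakenDialogue φ ψ d) 2 (Move.opening ψ).delay :=
  ⟨1, false, rfl, by omega, by omega, by simp,
    fun _ ↦ ⟨0, .impl φ ψ, rfl, by omega, rfl, .impl φ ψ⟩⟩

theorem eq_challenge_of_isReplyAt (h : IsReplyAt [.opening (.impl φ ψ)] 1 m) :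
    m = .challenge φ := by
  obtain ⟨k, z, href, hk, -, hattack, hdefense⟩ := h
  obtain rfl : k = 0 := by omega
  cases z with
  | false =>
    obtain ⟨_, _, hnone, -⟩ := hdefense rfl
    cases hnone
  | true =>
    obtain ⟨χ, hχ, -, hatt⟩ := hattack rfl
    obtain rfl : Formula.impl φ ψ = χ := Statement.form.inj hχ
    rcases m with ⟨s, r⟩
    cases hatt
    exact congrArg (Move.mk (.form φ)) href

theorem exists_eq_delay_of_isReplyAt (hO : d.length % 2 = 1)
    (h : IsReplyAt (weakenDialogue φ ψ d) (d.length + 2) m) (h0 : m.ref ≠ some (0, true)) :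
    ∃ m' : Move, m = m'.delay ∧ IsReplyAt d d.length m' := by
  obtain ⟨k, z, href, hk, hplayer, hattack, hdefense⟩ := h
  obtain ⟨k, rfl⟩ : ∃ k', k = k' + 2 := by
    refine Nat.exists_eq_add_of_le' (Nat.two_le_iff k |>.2 ⟨?_, by omega⟩)
    rintro rfl
    cases z with
    | true => exact h0 href
    | false =>
      obtain ⟨_, _, hnone, -⟩ := hdefense rfl
      cases hnone
  have hkd : k < d.length := by omega
  rw [weakenDialogue_getElem!_add_two hkd] at hattack hdefense
  refine ⟨⟨m.stmt, some (k, z)⟩, ?_, k, z, rfl, hkd, by omega, hattack, fun hz ↦ ?_⟩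
  · rcases m with ⟨s, r⟩
    exact congrArg (Move.mk s) href
  · obtain ⟨j, χ, hkj, hj, hjχ, hdef⟩ := hdefense hz
    obtain ⟨j, rfl, hkj'⟩ := Move.delay_ref_eq_attack_iff.1 hkj
    rw [weakenDialogue_getElem!_add_two (by omega)] at hjχ
    exact ⟨j, χ, hkj', by omega, hjχ, hdef⟩

theorem IsDialogue.eq_opening (hd : IsDialogue d) (hψ : CommencesWith ψ d) :
    d[0]! = .opening ψ := by
  have href := (hd.1 hψ.1).1
  have hstmt := hψ.2
  generalize d[0]! = x at href hstmt ⊢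
  cases x
  simp_all [Move.opening]

theorem IsDialogue.weaken (hd : IsDialogue d) (hψ : CommencesWith ψ d) :
    IsDialogue (weakenDialogue φ ψ d) := by
  refine ⟨fun _ ↦ ⟨rfl, _, rfl⟩, fun i h0 hi ↦ ?_⟩
  rw [length_weakenDialogue] at hi
  change IsReplyAt _ i _
  match i with
  | 1 => exact isReplyAt_challenge
  | 2 =>
    rw [weakenDialogue_getElem!_add_two hψ.1, hd.eq_opening hψ]
    exact isReplyAt_delay_opening
  | i + 3 =>
    have hi' : i + 1 < d.length := by omega
    rw [weakenDialogue_getElem!_add_two hi']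
    exact (hd.isReplyAt i.succ_pos hi').delay hi'.le

theorem RuleD10.weaken (hd : RuleD10 d) : RuleD10 (weakenDialogue φ ψ d) := by
  intro i hi hP a ha
  rw [length_weakenDialogue] at hi
  match i with
  | 0 => cases ha
  | i + 2 =>
    rw [weakenDialogue_getElem!_add_two (by omega)] at ha
    obtain ⟨j, hj, hO, hja⟩ := hd i (by omega) (by omega) a ha
    refine ⟨j + 2, by omega, by omega, ?_⟩
    rwa [weakenDialogue_getElem!_add_two (by omega)]

theorem eq_or_exists_of_weakenDialogue_attack (hi : i < (weakenDialogue φ ψ d).length)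
    (h : (weakenDialogue φ ψ d)[i]!.ref = some (k, true)) :
    (i = 1 ∧ k = 0) ∨
      ∃ i' < d.length, ∃ k', i = i' + 2 ∧ k = k' + 2 ∧ d[i']!.ref = some (k', true) := by
  rw [length_weakenDialogue] at hi
  match i with
  | 0 => cases h
  | 1 =>
    cases h
    exact Or.inl ⟨rfl, rfl⟩
  | i + 2 =>
    rw [weakenDialogue_getElem!_add_two (by omega)] at h
    obtain ⟨k', hk, hk'⟩ := Move.delay_ref_eq_attack_iff.1 h
    exact Or.inr ⟨i, by omega, k', rfl, hk, hk'⟩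

theorem ruleD13_weakenDialogue_iff : RuleD13 (weakenDialogue φ ψ d) ↔ RuleD13 d := by
  refine ⟨fun h k hk i hi j hj hik hjk ↦ ?_, fun h k hk i hi j hj hik hjk ↦ ?_⟩
  · have hij := h (k + 2) (by omega) (i + 2) (by simpa) (j + 2) (by simpa)
      (by rw [weakenDialogue_getElem!_add_two hi]; exact Move.delay_ref_of_eq_some hik)
      (by rw [weakenDialogue_getElem!_add_two hj]; exact Move.delay_ref_of_eq_some hjk)
    omega
  · rcases eq_or_exists_of_weakenDialogue_attack hi hik with
        ⟨rfl, rfl⟩ | ⟨i, hi', k, rfl, rfl, hik'⟩ <;>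
      rcases eq_or_exists_of_weakenDialogue_attack hj hjk with
        ⟨rfl, hk'⟩ | ⟨j, hj', k', rfl, hk', hjk'⟩
    · rfl
    · omega
    · omega
    · obtain rfl : k = k' := by omega
      rw [h k (by omega) i hi' j hj' hik' hjk']

theorem RuleD13.ref_ne_of_weakenDialogue_concat (h : RuleD13 (weakenDialogue φ ψ d ++ [m])) :
    m.ref ≠ some (0, true) := by
  intro hm
  have hlast :
      (weakenDialogue φ ψ d ++ [m])[(weakenDialogue φ ψ d).length]!.ref = some (0, true) := by
    rwa [getElem!_concat_length]
  exact absurd (h 0 rfl 1 (by simp) (weakenDialogue φ ψ d).length (by simp) rfl hlast) (by simp)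

/-- The properties of a rule set that make weakening admissible: a violation is never repaired by
later moves, attacks of O cannot be repeated, the rules survive the passage from `d` to
`weakenDialogue φ ψ d`, and there they allow O no additional continuations. -/
structure AdmitsWeakening (S : List Move → Prop) : Prop where
  of_prefix : ∀ {d e : List Move}, S d → e <+: d → S e
  ruleD13 : ∀ {d : List Move}, S d → RuleD13 d
  weaken : ∀ {φ ψ : Formula} {d : List Move}, S d → S (weakenDialogue φ ψ d)
  concat_of_weakenDialogue : ∀ {φ ψ : Formula} {d : List Move} {m : Move}, S d → d.length % 2 = 1 →
    S (weakenDialogue φ ψ (d ++ [m])) → S (d ++ [m])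

theorem admitsWeakening_nRules : AdmitsWeakening NRules where
  of_prefix hd h := ⟨hd.1.of_prefix h, hd.2.of_prefix h⟩
  ruleD13 hd := hd.2
  weaken hd := ⟨hd.1.weaken, ruleD13_weakenDialogue_iff.2 hd.2⟩
  concat_of_weakenDialogue hd hO h := ⟨hd.1.concat_of_odd hO, ruleD13_weakenDialogue_iff.1 h.2⟩

namespace SDialogueFor

theorem length_pos (hd : SDialogueFor S φ d) : 0 < d.length := hd.2.2.1

theorem of_prefix (hS : AdmitsWeakening S) (hd : SDialogueFor S φ d) (h : e <+: d)
    (h0 : 0 < e.length) : SDialogueFor S φ e :=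
  ⟨hd.1.of_prefix h, hS.of_prefix hd.2.1 h, h0, by
    rw [getElem!_eq_of_prefix h h0]; exact hd.2.2.2⟩

theorem weaken (hS : AdmitsWeakening S) (hd : SDialogueFor S ψ d) :
    SDialogueFor S (.impl φ ψ) (weakenDialogue φ ψ d) :=
  ⟨hd.1.weaken hd.2.2, hS.weaken hd.2.1, by simp, rfl⟩

theorem exists_of_weakenDialogue_concat (hS : AdmitsWeakening S) (hd : SDialogueFor S ψ d)
    (hO : d.length % 2 = 1) (h : SDialogueFor S (.impl φ ψ) (weakenDialogue φ ψ d ++ [m])) :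
    ∃ m' : Move, m = m'.delay ∧ SDialogueFor S ψ (d ++ [m']) := by
  have hreply : IsReplyAt (weakenDialogue φ ψ d) (d.length + 2) m := by
    simpa using h.1.isReplyAt_of_concat (by simp)
  obtain ⟨m', rfl, hm'⟩ := exists_eq_delay_of_isReplyAt hO hreply
    (hS.ruleD13 h.2.1).ref_ne_of_weakenDialogue_concat
  refine ⟨m', rfl, hd.1.concat hd.length_pos hm', ?_, by simp, ?_⟩
  · exact hS.concat_of_weakenDialogue hd.2.1 hO (by rw [weakenDialogue_concat]; exact h.2.1)
  · rw [getElem!_append_of_lt _ hd.length_pos]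
    exact hd.2.2.2

end SDialogueFor

theorem IsWinningStrategy.nil_notMem {T : Set (List Move)} (hT : IsWinningStrategy S φ T) :
    [] ∉ T := fun h ↦
  (hT.dialogues _ h).length_pos.ne rfl

theorem IsWinningStrategy.singleton_mem_iff {T : Set (List Move)}
    (hT : IsWinningStrategy S φ T) : [m] ∈ T ↔ m = .opening φ := by
  have eq_opening : ∀ {d}, d ∈ T → d[0]! = .opening φ := fun hd ↦
    (hT.dialogues _ hd).1.eq_opening (hT.dialogues _ hd).2.2
  refine ⟨eq_opening, ?_⟩
  rintro rfl
  obtain ⟨d, hd⟩ := hT.nonempty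
  match d with
  | [] => exact absurd hd hT.nil_notMem
  | x :: d =>
    obtain rfl : x = .opening φ := eq_opening hd
    exact hT.prefix_closed _ hd _ (by simp) (by simp)

/-- P's strategy for `φ → ψ` obtained from a strategy `T` for `ψ`: all the positions reached when
the dialogues of `T` are played after O's attack on `φ → ψ`. -/
def weakenStrategy (φ ψ : Formula) (T : Set (List Move)) : Set (List Move) :=
  {e | 0 < e.length ∧ ∃ d ∈ T, e <+: weakenDialogue φ ψ d}

namespace IsWinningStrategy

variable {T : Set (List Move)}

theorem mem_weakenStrategy_iff (hT : IsWinningStrategy S ψ T) :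
    e ∈ weakenStrategy φ ψ T ↔
      e = [.opening (.impl φ ψ)] ∨ ∃ d, (d = [] ∨ d ∈ T) ∧ e = weakenDialogue φ ψ d := by
  constructor
  · rintro ⟨h0, d, hd, h⟩
    rcases prefix_weakenDialogue_iff.1 h with rfl | rfl | ⟨d', hd', rfl⟩
    · exact absurd h0 (lt_irrefl 0)
    · exact Or.inl rfl
    · exact Or.inr ⟨d', d'.length.eq_zero_or_pos.imp List.eq_nil_of_length_eq_zero
        (hT.prefix_closed d hd d' hd'), rfl⟩
  · obtain ⟨d₀, hd₀⟩ := hT.nonempty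
    rintro (rfl | ⟨d, rfl | hd, rfl⟩)
    · exact ⟨by simp, d₀, hd₀, by simp [weakenDialogue]⟩
    · exact ⟨by simp, d₀, hd₀, by simp [weakenDialogue]⟩
    · exact ⟨by simp, d, hd, List.prefix_rfl⟩

theorem weakenDialogue_mem_weakenStrategy_iff (hT : IsWinningStrategy S ψ T) :
    weakenDialogue φ ψ d ∈ weakenStrategy φ ψ T ↔ d = [] ∨ d ∈ T := by
  rw [hT.mem_weakenStrategy_iff]
  constructor
  · rintro (h | ⟨d', hd', h⟩)
    · simp [weakenDialogue] at h
    · rwa [weakenDialogue_injective h]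
  · exact fun hd ↦ Or.inr ⟨d, hd, rfl⟩

theorem weakenDialogue_concat_delay_mem_iff (hT : IsWinningStrategy S ψ T) :
    weakenDialogue φ ψ d ++ [m.delay] ∈ weakenStrategy φ ψ T ↔ d ++ [m] ∈ T := by
  rw [← weakenDialogue_concat, hT.weakenDialogue_mem_weakenStrategy_iff]
  simp

theorem exists_eq_delay_of_weakenDialogue_concat_mem (hT : IsWinningStrategy S ψ T)
    (h : weakenDialogue φ ψ d ++ [m] ∈ weakenStrategy φ ψ T) : ∃ m' : Move, m = m'.delay := by
  rcases hT.mem_weakenStrategy_iff.1 h with h | ⟨d', -, h⟩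
  · simp [weakenDialogue] at h
  · have hmap : d.map Move.delay ++ [m] = d'.map Move.delay := by simpa [weakenDialogue] using h
    have hm : m ∈ d'.map Move.delay := hmap ▸ by simp
    obtain ⟨m', -, rfl⟩ := List.mem_map.1 hm
    exact ⟨m', rfl⟩

theorem sDialogueFor_of_mem_weakenStrategy (hS : AdmitsWeakening S)
    (hT : IsWinningStrategy S ψ T) (he : e ∈ weakenStrategy φ ψ T) :
    SDialogueFor S (.impl φ ψ) e := by
  obtain ⟨h0, d, hd, h⟩ := he
  exact ((hT.dialogues d hd).weaken hS).of_prefix hS h h0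

theorem winsFor_of_leaf_weakenStrategy (hS : AdmitsWeakening S) (hT : IsWinningStrategy S ψ T)
    (he : e ∈ weakenStrategy φ ψ T) (hleaf : ∀ m : Move, e ++ [m] ∉ weakenStrategy φ ψ T) :
    WinsFor S (.impl φ ψ) e := by
  have hdialogue := hT.sDialogueFor_of_mem_weakenStrategy hS he
  rcases hT.mem_weakenStrategy_iff.1 he with rfl | ⟨d, rfl | hd, rfl⟩
  · exact absurd (hT.weakenDialogue_mem_weakenStrategy_iff.2 (Or.inl rfl)) (hleaf (.challenge φ))
  · exact absurd (hT.weakenDialogue_concat_delay_mem_iff.2 (hT.singleton_mem_iff.2 rfl)) (hleaf _)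
  · obtain ⟨hdψ, hP, hstuck⟩ := hT.leaf_wins d hd fun m hm ↦
      hleaf m.delay (hT.weakenDialogue_concat_delay_mem_iff.2 hm)
    refine ⟨hdialogue, by simpa using hP, fun m hm ↦ ?_⟩
    obtain ⟨m', -, hm'⟩ := hdψ.exists_of_weakenDialogue_concat hS hP hm
    exact hstuck m' hm'

theorem exists_ofFn_notMem_weakenStrategy (hT : IsWinningStrategy S ψ T) (f : ℕ → Move) :
    ∃ n : ℕ, 0 < n ∧ (List.ofFn fun i : Fin n ↦ f i) ∉ weakenStrategy φ ψ T := by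
  by_contra! hbranch
  let g : ℕ → Move := fun i ↦ Function.invFun Move.delay (f (i + 2))
  obtain ⟨n, hn, hnT⟩ := hT.no_infinite_branch g
  refine hnT ?_
  rcases hT.mem_weakenStrategy_iff.1 (hbranch (n + 2) (by omega)) with h | ⟨d, hd, h⟩
  · simp at h
  have htail : (List.ofFn fun i : Fin n ↦ f (i + 2)) = d.map Move.delay := by
    simpa [weakenDialogue, List.ofFn_succ] using congrArg (List.drop 2) h
  have hg : (List.ofFn fun i : Fin n ↦ g i) = d := by
    have := congrArg (List.map (Function.invFun Move.delay)) htail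
    rwa [List.map_ofFn, List.map_map, Function.invFun_comp Move.delay_injective,
      List.map_id] at this
  rw [hg]
  refine hd.resolve_left ?_
  rintro rfl
  simp [hn.ne'] at hg

theorem existsUnique_concat_mem_weakenStrategy (hT : IsWinningStrategy S ψ T)
    (he : e ∈ weakenStrategy φ ψ T) (hP : e.length % 2 = 0) :
    ∃! m : Move, e ++ [m] ∈ weakenStrategy φ ψ T := by
  rcases hT.mem_weakenStrategy_iff.1 he with rfl | ⟨d, hd, rfl⟩
  · simp at hP
  have hunique : ∃! m : Move, d ++ [m] ∈ T := by
    rcases hd with rfl | hd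
    · simp [hT.singleton_mem_iff]
    · exact hT.odd_unique_child d hd (hT.dialogues d hd).length_pos (by simpa using hP)
  obtain ⟨m, hm, hm_unique⟩ := hunique
  refine ⟨m.delay, hT.weakenDialogue_concat_delay_mem_iff.2 hm, fun y hy ↦ ?_⟩
  obtain ⟨m', rfl⟩ := hT.exists_eq_delay_of_weakenDialogue_concat_mem hy
  rw [hm_unique m' (hT.weakenDialogue_concat_delay_mem_iff.1 hy)]

theorem concat_mem_weakenStrategy (hS : AdmitsWeakening S) (hT : IsWinningStrategy S ψ T)
    (he : e ∈ weakenStrategy φ ψ T) (hO : e.length % 2 = 1)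
    (hm : SDialogueFor S (.impl φ ψ) (e ++ [m])) : e ++ [m] ∈ weakenStrategy φ ψ T := by
  rcases hT.mem_weakenStrategy_iff.1 he with rfl | ⟨d, rfl | hd, rfl⟩
  · obtain rfl := eq_challenge_of_isReplyAt (hm.1.isReplyAt_of_concat Nat.one_pos)
    exact hT.weakenDialogue_mem_weakenStrategy_iff.2 (Or.inl rfl)
  · simp at hO
  · have hO' : d.length % 2 = 1 := by simpa using hO
    obtain ⟨m', rfl, hm'⟩ := (hT.dialogues d hd).exists_of_weakenDialogue_concat hS hO' hm
    exact hT.weakenDialogue_concat_delay_mem_iff.2 (hT.even_all_children d hd hO' m' hm')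

theorem weaken (hS : AdmitsWeakening S) (hT : IsWinningStrategy S ψ T) :
    IsWinningStrategy S (.impl φ ψ) (weakenStrategy φ ψ T) where
  nonempty := ⟨_, hT.mem_weakenStrategy_iff.2 (Or.inl rfl)⟩
  dialogues _ he := hT.sDialogueFor_of_mem_weakenStrategy hS he
  prefix_closed := fun _ ⟨_, d, hd, hed⟩ _ h h0 ↦ ⟨h0, d, hd, h.trans hed⟩
  leaf_wins _ he hleaf := hT.winsFor_of_leaf_weakenStrategy hS he hleaf
  no_infinite_branch := hT.exists_ofFn_notMem_weakenStrategy
  odd_unique_child _ he _ hP := hT.existsUnique_concat_mem_weakenStrategy he hP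
  even_all_children _ he hO _ hm := hT.concat_mem_weakenStrategy hS he hO hm

end IsWinningStrategy

theorem weakening_general (hS : AdmitsWeakening S) (φ ψ : Formula) (h : SValid S ψ) :
    SValid S (.impl φ ψ) :=
  let ⟨_, hT⟩ := h
  ⟨_, hT.weaken hS⟩

/-- **Weakening.** For all formulas `φ` and `ψ`: if `ψ` is N-valid,
then `φ → ψ` is N-valid. -/
theorem weakening (φ ψ : Formula) (h : NValid ψ) : NValid (Formula.impl φ ψ) :=
  weakening_general admitsWeakening_nRules φ ψ h
end
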